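/- Let U⁸ := ⟨(1,2,3,2,0,0,0),(0,0,0,2,1,2,3)⟩_ℝ ⊆ (ℝ/ℤ)⁷. Then U⁸ is a 2-dimensional proper subtorus with D(U⁸) = 3/10, and the relative spectrum 𝒮₁(U⁸) is a finite set. -/

import Mathlib

noncomputable section

abbrev Torus (n : ℕ) : Type := Fin n → AddCircle (1 : ℝ)

def torusProj {n : ℕ} (x : Fin n → ℝ) : Torus n := fun i => (x i : AddCircle (1 : ℝ))

def spanTorus {n k : ℕ} (v : Fin k → Fin n → ℤ) : Set (Torus n) :=
  {p | ∃ t : Fin k → ℝ, p = torusProj fun i => ∑ j, t j * (v j i : ℝ)}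

def IsSubtorus {n : ℕ} (k : ℕ) (S : Set (Torus n)) : Prop :=
  ∃ v : Fin k → Fin n → ℤ,
    LinearIndependent ℝ (fun j : Fin k => fun i : Fin n => (v j i : ℝ)) ∧ S = spanTorus v

def IsProperSub {n : ℕ} (S : Set (Torus n)) : Prop :=
  ¬ S ⊆ ⋃ i : Fin n, {x : Torus n | x i = 0}

def DVal {n : ℕ} (S : Set (Torus n)) : ℝ :=
  sInf ((fun x : Torus n => ⨆ i, dist (x i) ((1 / 2 : ℝ) : AddCircle (1 : ℝ))) '' S)

def relSpec1 {n : ℕ} (U : Set (Torus n)) : Set ℝ :=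
  {d | ∃ T : Set (Torus n), IsSubtorus 1 T ∧ IsProperSub T ∧ T ⊆ U ∧ d = DVal T}

def Spec (k n : ℕ) : Set ℝ :=
  {d | ∃ T : Set (Torus n), IsSubtorus k T ∧ IsProperSub T ∧ d = DVal T}

def progSet (d : ℝ) (α β : ℚ) : Set ℝ :=
  {x | ∃ s : ℕ, x = d + 1 / ((α : ℝ) * s + (β : ℝ))}

def U8 : Set (Torus 7) := spanTorus ![![1, 2, 3, 2, 0, 0, 0], ![0, 0, 0, 2, 1, 2, 3]]

def fval {n : ℕ} (x : Torus n) : ℝ := ⨆ i, dist (x i) ((1 / 2 : ℝ) : AddCircle (1 : ℝ))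

theorem DVal_eq {n : ℕ} (S : Set (Torus n)) : DVal S = sInf (fval '' S) := rfl

theorem dist_half (y : ℝ) :
    dist (y : AddCircle (1 : ℝ)) ((1 / 2 : ℝ) : AddCircle (1 : ℝ))
      = |y - 1 / 2 - round (y - 1 / 2)| := by
  rw [dist_eq_norm, ← AddCircle.coe_sub]
  exact UnitAddCircle.norm_eq

theorem dist_half_le (y : ℝ) (n : ℤ) (h1 : 1 / 5 ≤ y - n) (h2 : y - n ≤ 4 / 5) :
    dist (y : AddCircle (1 : ℝ)) ((1 / 2 : ℝ) : AddCircle (1 : ℝ)) ≤ 3 / 10 := by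
  rw [dist_half]
  refine (round_le _ n).trans ?_
  rw [abs_le]
  constructor <;> linarith

theorem dist_half_lt (y : ℝ)
    (h : dist (y : AddCircle (1 : ℝ)) ((1 / 2 : ℝ) : AddCircle (1 : ℝ)) < 3 / 10) :
    ∃ n : ℤ, 1 / 5 < y - n ∧ y - n < 4 / 5 := by
  rw [dist_half, abs_lt] at h
  exact ⟨round (y - 1 / 2), by linarith, by linarith⟩

/-- the point of `U8` with parameters `s`, `t` -/
def pt (s t : ℝ) : Torus 7 := torusProj ![s, 2 * s, 3 * s, 2 * s + 2 * t, t, 2 * t, 3 * t]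

theorem mem_U8 (x : Torus 7) : x ∈ U8 ↔ ∃ s t : ℝ, x = pt s t := by
  have key : ∀ c : Fin 2 → ℝ, (torusProj fun i => ∑ j, c j *
      (((![![1, 2, 3, 2, 0, 0, 0], ![0, 0, 0, 2, 1, 2, 3]] : Fin 2 → Fin 7 → ℤ) j i : ℤ) : ℝ))
      = pt (c 0) (c 1) := by
    intro c
    unfold pt
    congr 1
    funext i
    fin_cases i <;> simp [Fin.sum_univ_two] <;> ring
  constructor
  · rintro ⟨c, rfl⟩
    exact ⟨c 0, c 1, key c⟩
  · rintro ⟨s, t, rfl⟩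
    exact ⟨![s, t], (key ![s, t]).symm⟩

theorem side (s : ℝ) (n0 n1 n2 : ℤ) (a0 : 1 / 5 < s - n0) (b0 : s - n0 < 4 / 5)
    (a1 : 1 / 5 < 2 * s - n1) (b1 : 2 * s - n1 < 4 / 5)
    (a2 : 1 / 5 < 3 * s - n2) (b2 : 3 * s - n2 < 4 / 5) :
    (1 / 5 < s - n0 ∧ s - n0 < 4 / 15) ∨ (11 / 15 < s - n0 ∧ s - n0 < 4 / 5) := by
  obtain ⟨k1, rfl⟩ : ∃ k, n1 = 2 * n0 + k := ⟨n1 - 2 * n0, by ring⟩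
  obtain ⟨k2, rfl⟩ : ∃ k, n2 = 3 * n0 + k := ⟨n2 - 3 * n0, by ring⟩
  push_cast at a1 b1 a2 b2
  have h1 : (-1 : ℤ) < k1 := by
    have : ((-1 : ℤ) : ℝ) < k1 := by push_cast; linarith
    exact_mod_cast this
  have h2 : k1 < 2 := by
    have : (k1 : ℝ) < ((2 : ℤ) : ℝ) := by push_cast; linarith
    exact_mod_cast this
  have h3 : (-1 : ℤ) < k2 := by
    have : ((-1 : ℤ) : ℝ) < k2 := by push_cast; linarith
    exact_mod_cast this
  have h4 : k2 < 3 := by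
    have : (k2 : ℝ) < ((3 : ℤ) : ℝ) := by push_cast; linarith
    exact_mod_cast this
  have c1 : (k1 : ℝ) = 0 ∨ (k1 : ℝ) = 1 := by
    have : k1 = 0 ∨ k1 = 1 := by omega
    exact_mod_cast this
  have c2 : (k2 : ℝ) = 0 ∨ (k2 : ℝ) = 1 ∨ (k2 : ℝ) = 2 := by
    have : k2 = 0 ∨ k2 = 1 ∨ k2 = 2 := by omega
    exact_mod_cast this
  rcases c1 with c1 | c1 <;> rcases c2 with c2 | c2 | c2 <;> rw [c1] at a1 b1 <;>
    rw [c2] at a2 b2 <;>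
    first
    | (exfalso; linarith)
    | (left; constructor <;> linarith)
    | (right; constructor <;> linarith)

theorem core_impossible (s t : ℝ) (n0 n1 n2 n3 n4 n5 n6 : ℤ)
    (a0 : 1 / 5 < s - n0) (b0 : s - n0 < 4 / 5)
    (a1 : 1 / 5 < 2 * s - n1) (b1 : 2 * s - n1 < 4 / 5)
    (a2 : 1 / 5 < 3 * s - n2) (b2 : 3 * s - n2 < 4 / 5)
    (a3 : 1 / 5 < 2 * s + 2 * t - n3) (b3 : 2 * s + 2 * t - n3 < 4 / 5)
    (a4 : 1 / 5 < t - n4) (b4 : t - n4 < 4 / 5)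
    (a5 : 1 / 5 < 2 * t - n5) (b5 : 2 * t - n5 < 4 / 5)
    (a6 : 1 / 5 < 3 * t - n6) (b6 : 3 * t - n6 < 4 / 5) : False := by
  have hs := side s n0 n1 n2 a0 b0 a1 b1 a2 b2
  have ht := side t n4 n5 n6 a4 b4 a5 b5 a6 b6
  obtain ⟨k, rfl⟩ : ∃ k, n3 = 2 * n0 + 2 * n4 + k := ⟨n3 - 2 * n0 - 2 * n4, by ring⟩
  push_cast at a3 b3
  have h1 : (-1 : ℤ) < k := by
    have : ((-1 : ℤ) : ℝ) < k := by push_cast; linarith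
    exact_mod_cast this
  have h2 : k < 4 := by
    have : (k : ℝ) < ((4 : ℤ) : ℝ) := by push_cast; linarith
    exact_mod_cast this
  have c1 : (k : ℝ) = 0 ∨ (k : ℝ) = 1 ∨ (k : ℝ) = 2 ∨ (k : ℝ) = 3 := by
    have : k = 0 ∨ k = 1 ∨ k = 2 ∨ k = 3 := by omega
    exact_mod_cast this
  rcases hs with ⟨p1, p2⟩ | ⟨p1, p2⟩ <;> rcases ht with ⟨q1, q2⟩ | ⟨q1, q2⟩ <;>
    rcases c1 with c1 | c1 | c1 | c1 <;> rw [c1] at a3 b3 <;> linarith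

theorem fval_ge (x : Torus 7) (hx : x ∈ U8) : 3 / 10 ≤ fval x := by
  obtain ⟨s, t, rfl⟩ := (mem_U8 x).1 hx
  by_contra! h
  have hi : ∀ i, dist (pt s t i) ((1 / 2 : ℝ) : AddCircle (1 : ℝ)) < 3 / 10 := fun i =>
    (le_ciSup (f := fun i => dist (pt s t i) ((1 / 2 : ℝ) : AddCircle (1 : ℝ)))
      (Set.finite_range _).bddAbove i).trans_lt h
  obtain ⟨n0, a0, b0⟩ := dist_half_lt s (hi 0)
  obtain ⟨n1, a1, b1⟩ := dist_half_lt (2 * s) (hi 1)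
  obtain ⟨n2, a2, b2⟩ := dist_half_lt (3 * s) (hi 2)
  obtain ⟨n3, a3, b3⟩ := dist_half_lt (2 * s + 2 * t) (hi 3)
  obtain ⟨n4, a4, b4⟩ := dist_half_lt t (hi 4)
  obtain ⟨n5, a5, b5⟩ := dist_half_lt (2 * t) (hi 5)
  obtain ⟨n6, a6, b6⟩ := dist_half_lt (3 * t) (hi 6)
  exact core_impossible s t n0 n1 n2 n3 n4 n5 n6 a0 b0 a1 b1 a2 b2 a3 b3 a4 b4 a5 b5 a6 b6

theorem fval_le (s t : ℝ) (m n : ℤ)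
    (h : (s = 2 / 5 + m ∧ 1 / 5 ≤ t - n ∧ t - n ≤ 4 / 15) ∨
      (t = 2 / 5 + n ∧ 1 / 5 ≤ s - m ∧ s - m ≤ 4 / 15)) : fval (pt s t) ≤ 3 / 10 := by
  refine ciSup_le fun i => ?_
  rcases h with ⟨rfl, h1, h2⟩ | ⟨rfl, h1, h2⟩
  · fin_cases i
    · exact dist_half_le (2 / 5 + m) m (by linarith) (by linarith)
    · exact dist_half_le (2 * (2 / 5 + m)) (2 * m) (by push_cast; linarith) (by push_cast; linarith)
    · exact dist_half_le (3 * (2 / 5 + m)) (3 * m + 1)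
        (by push_cast; linarith) (by push_cast; linarith)
    · exact dist_half_le (2 * (2 / 5 + m) + 2 * t) (2 * m + 2 * n + 1)
        (by push_cast; linarith) (by push_cast; linarith)
    · exact dist_half_le t n (by linarith) (by linarith)
    · exact dist_half_le (2 * t) (2 * n) (by push_cast; linarith) (by push_cast; linarith)
    · exact dist_half_le (3 * t) (3 * n) (by push_cast; linarith) (by push_cast; linarith)
  · fin_cases i
    · exact dist_half_le s m (by linarith) (by linarith)
    · exact dist_half_le (2 * s) (2 * m) (by push_cast; linarith) (by push_cast; linarith)
    · exact dist_half_le (3 * s) (3 * m) (by push_cast; linarith) (by push_cast; linarith)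
    · exact dist_half_le (2 * s + 2 * (2 / 5 + n)) (2 * m + 2 * n + 1)
        (by push_cast; linarith) (by push_cast; linarith)
    · exact dist_half_le (2 / 5 + n) n (by linarith) (by linarith)
    · exact dist_half_le (2 * (2 / 5 + n)) (2 * n) (by push_cast; linarith) (by push_cast; linarith)
    · exact dist_half_le (3 * (2 / 5 + n)) (3 * n + 1)
        (by push_cast; linarith) (by push_cast; linarith)

theorem DVal_of (S : Set (Torus 7)) (hS : S ⊆ U8) (x : Torus 7) (hx : x ∈ S)
    (hf : fval x ≤ 3 / 10) : DVal S = 3 / 10 := by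
  rw [DVal_eq]
  have hlb : ∀ y ∈ fval '' S, (3 / 10 : ℝ) ≤ y := by
    rintro _ ⟨y, hy, rfl⟩
    exact fval_ge y (hS hy)
  apply le_antisymm
  · exact (csInf_le ⟨3 / 10, hlb⟩ ⟨x, hx, rfl⟩).trans hf
  · exact le_csInf ⟨_, x, hx, rfl⟩ hlb

theorem exists_param (p q : ℤ) (hc : IsCoprime p q) (hp : 15 ≤ |p|) :
    ∃ (x : ℝ) (m n : ℤ), x * p = 2 / 5 + m ∧ 1 / 5 ≤ x * q - n ∧ x * q - n ≤ 4 / 15 := by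
  have hp0 : (p : ℝ) ≠ 0 := by
    have : p ≠ 0 := by rintro rfl; simp at hp
    exact_mod_cast this
  obtain ⟨j, hj1, hj2⟩ : ∃ j : ℤ, (1 / 5 : ℝ) ≤ (2 * q / 5 + j) / p ∧
      (2 * q / 5 + j) / p ≤ (4 / 15 : ℝ) := by
    rcases le_abs.1 hp with h | h
    · have h' : (15 : ℝ) ≤ p := by exact_mod_cast h
      have e1 := Int.le_ceil ((p : ℝ) / 5 - 2 * q / 5)
      have e2 := Int.ceil_lt_add_one ((p : ℝ) / 5 - 2 * q / 5)
      refine ⟨⌈(p : ℝ) / 5 - 2 * q / 5⌉, ?_, ?_⟩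
      · rw [le_div_iff₀ (by linarith)]; linarith
      · rw [div_le_iff₀ (by linarith)]; linarith
    · have h' : (15 : ℝ) ≤ -p := by exact_mod_cast h
      have e1 := Int.le_ceil (4 * (p : ℝ) / 15 - 2 * q / 5)
      have e2 := Int.ceil_lt_add_one (4 * (p : ℝ) / 15 - 2 * q / 5)
      refine ⟨⌈4 * (p : ℝ) / 15 - 2 * q / 5⌉, ?_, ?_⟩
      · rw [le_div_iff_of_neg (by linarith)]; linarith
      · rw [div_le_iff_of_neg (by linarith)]; linarith
  obtain ⟨a, b, hab⟩ := hc
  have hab' : (a : ℝ) * p + b * q = 1 := by exact_mod_cast hab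
  have key : (2 / 5 + ((j * b : ℤ) : ℝ)) / p * q - ((-(j * a) : ℤ) : ℝ)
      = (2 * q / 5 + j) / p := by
    push_cast
    field_simp
    linear_combination (5 * j : ℝ) * hab'
  refine ⟨(2 / 5 + ((j * b : ℤ) : ℝ)) / p, j * b, -(j * a), ?_, ?_, ?_⟩
  · field_simp
  · rw [key]; exact hj1
  · rw [key]; exact hj2

/-- the one-dimensional subtorus of `U8` with slope `(p, q)` -/
def line (p q : ℤ) : Set (Torus 7) := {y | ∃ x : ℝ, y = pt (x * p) (x * q)}

theorem line_sub (p q : ℤ) : line p q ⊆ U8 := by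
  rintro _ ⟨x, rfl⟩
  exact (mem_U8 _).2 ⟨_, _, rfl⟩

theorem DVal_line (p q : ℤ) (hc : IsCoprime p q) (h : 15 ≤ |p| ∨ 15 ≤ |q|) :
    DVal (line p q) = 3 / 10 := by
  rcases h with h | h
  · obtain ⟨x, m, n, h1, h2, h3⟩ := exists_param p q hc h
    exact DVal_of _ (line_sub p q) _ ⟨x, rfl⟩ (fval_le _ _ m n (Or.inl ⟨h1, h2, h3⟩))
  · obtain ⟨x, m, n, h1, h2, h3⟩ := exists_param q p hc.symm h
    exact DVal_of _ (line_sub p q) _ ⟨x, rfl⟩ (fval_le _ _ n m (Or.inr ⟨h1, h2, h3⟩))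

theorem int_zero_of (k : ℤ) (h : ∀ x : ℝ, ∃ n : ℤ, x * k = n) : k = 0 := by
  by_contra hk
  obtain ⟨n, hn⟩ := h (1 / (2 * k))
  have hk' : (k : ℝ) ≠ 0 := by exact_mod_cast hk
  field_simp at hn
  have : (1 : ℤ) = 2 * n := by exact_mod_cast hn
  omega

theorem coe_eq_iff (a b : ℝ) (h : (a : AddCircle (1 : ℝ)) = b) : ∃ n : ℤ, a = b + n := by
  have h' : ((a - b : ℝ) : AddCircle (1 : ℝ)) = 0 := by
    rw [AddCircle.coe_sub, h, sub_self]
  obtain ⟨n, hn⟩ := (AddCircle.coe_eq_zero_iff (1 : ℝ)).1 h'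
  refine ⟨n, ?_⟩
  simp only [zsmul_eq_mul, mul_one] at hn
  linarith

theorem subtorus_eq_line (T : Set (Torus 7)) (hT : IsSubtorus 1 T) (hU : T ⊆ U8) :
    ∃ p q : ℤ, IsCoprime p q ∧ T = line p q := by
  obtain ⟨v, hv, rfl⟩ := hT
  have hpts : ∀ x : ℝ, ∃ s t : ℝ, torusProj (fun i => x * (v 0 i : ℝ)) = pt s t := by
    intro x
    apply (mem_U8 _).1 (hU _)
    exact ⟨fun _ => x, by simp⟩
  have hrel : ∀ x : ℝ, ∃ (s t : ℝ) (n : Fin 7 → ℤ), x * v 0 0 = s + n 0 ∧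
      x * v 0 1 = 2 * s + n 1 ∧ x * v 0 2 = 3 * s + n 2 ∧ x * v 0 3 = 2 * s + 2 * t + n 3 ∧
      x * v 0 4 = t + n 4 ∧ x * v 0 5 = 2 * t + n 5 ∧ x * v 0 6 = 3 * t + n 6 := by
    intro x
    obtain ⟨s, t, h⟩ := hpts x
    have : ∀ i, ∃ n : ℤ, x * (v 0 i : ℝ) =
        ![s, 2 * s, 3 * s, 2 * s + 2 * t, t, 2 * t, 3 * t] i + n := fun i =>
      coe_eq_iff _ _ (congrFun h i)
    choose n hn using this
    exact ⟨s, t, n, hn 0, hn 1, hn 2, hn 3, hn 4, hn 5, hn 6⟩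
  have e1 : v 0 1 - 2 * v 0 0 = 0 := int_zero_of _ fun x => by
    obtain ⟨s, t, n, h0, h1, h2, h3, h4, h5, h6⟩ := hrel x
    exact ⟨n 1 - 2 * n 0, by push_cast; linarith⟩
  have e2 : v 0 2 - 3 * v 0 0 = 0 := int_zero_of _ fun x => by
    obtain ⟨s, t, n, h0, h1, h2, h3, h4, h5, h6⟩ := hrel x
    exact ⟨n 2 - 3 * n 0, by push_cast; linarith⟩
  have e3 : v 0 3 - 2 * v 0 0 - 2 * v 0 4 = 0 := int_zero_of _ fun x => by
    obtain ⟨s, t, n, h0, h1, h2, h3, h4, h5, h6⟩ := hrel x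
    exact ⟨n 3 - 2 * n 0 - 2 * n 4, by push_cast; linarith⟩
  have e5 : v 0 5 - 2 * v 0 4 = 0 := int_zero_of _ fun x => by
    obtain ⟨s, t, n, h0, h1, h2, h3, h4, h5, h6⟩ := hrel x
    exact ⟨n 5 - 2 * n 4, by push_cast; linarith⟩
  have e6 : v 0 6 - 3 * v 0 4 = 0 := int_zero_of _ fun x => by
    obtain ⟨s, t, n, h0, h1, h2, h3, h4, h5, h6⟩ := hrel x
    exact ⟨n 6 - 3 * n 4, by push_cast; linarith⟩
  have hne : v 0 0 ≠ 0 ∨ v 0 4 ≠ 0 := by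
    by_contra! hcon
    obtain ⟨z0, z4⟩ := hcon
    apply hv.ne_zero 0
    funext i
    fin_cases i <;> simp <;> omega
  have hv' : ∀ x : ℝ, torusProj (fun i => x * (v 0 i : ℝ)) = pt (x * v 0 0) (x * v 0 4) := by
    intro x
    have f1 : (v 0 1 : ℝ) = 2 * v 0 0 := by exact_mod_cast (by omega : v 0 1 = 2 * v 0 0)
    have f2 : (v 0 2 : ℝ) = 3 * v 0 0 := by exact_mod_cast (by omega : v 0 2 = 3 * v 0 0)
    have f3 : (v 0 3 : ℝ) = 2 * v 0 0 + 2 * v 0 4 := by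
      exact_mod_cast (by omega : v 0 3 = 2 * v 0 0 + 2 * v 0 4)
    have f5 : (v 0 5 : ℝ) = 2 * v 0 4 := by exact_mod_cast (by omega : v 0 5 = 2 * v 0 4)
    have f6 : (v 0 6 : ℝ) = 3 * v 0 4 := by exact_mod_cast (by omega : v 0 6 = 3 * v 0 4)
    unfold pt
    congr 1
    funext i
    fin_cases i <;> simp [f1, f2, f3, f5, f6] <;> ring
  have hg : 0 < Int.gcd (v 0 0) (v 0 4) := by
    rw [Int.gcd_pos_iff]; exact hne
  obtain ⟨p, q, hpq, hp, hq⟩ := Int.exists_gcd_one hg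
  set g : ℕ := Int.gcd (v 0 0) (v 0 4) with hgdef
  have hg' : (g : ℝ) ≠ 0 := by positivity
  have hp' : (v 0 0 : ℝ) = p * g := by rw [hp]; push_cast; ring
  have hq' : (v 0 4 : ℝ) = q * g := by rw [hq]; push_cast; ring
  refine ⟨p, q, Int.isCoprime_iff_gcd_eq_one.2 hpq, ?_⟩
  ext y
  constructor
  · rintro ⟨c, rfl⟩
    refine ⟨c 0 * g, ?_⟩
    have := hv' (c 0)
    simp only [Fin.sum_univ_one]
    rw [this, hp', hq']
    congr 1 <;> ring
  · rintro ⟨x, rfl⟩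
    refine ⟨fun _ => x / g, ?_⟩
    simp only [Fin.sum_univ_one]
    rw [hv', hp', hq']
    congr 1 <;> field_simp

/-- `U⁸` is a 2-dimensional proper subtorus of `(ℝ/ℤ)⁷` with `D(U⁸) = 3/10`
and finite relative spectrum `𝒮₁(U⁸)`. -/
theorem stmt19 :
    IsSubtorus 2 U8 ∧ IsProperSub U8 ∧ DVal U8 = 3/10 ∧ (relSpec1 U8).Finite := by
  refine ⟨⟨_, ?_, rfl⟩, ?_, ?_, ?_⟩
  · rw [Fintype.linearIndependent_iff]
    intro g hg i
    have h0 := congrFun hg 0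
    have h4 := congrFun hg 4
    simp [Fin.sum_univ_two] at h0 h4
    fin_cases i
    · exact h0
    · exact h4
  · intro h
    have hm : pt (2 / 5) (1 / 5) ∈ U8 := (mem_U8 _).2 ⟨_, _, rfl⟩
    obtain ⟨i, hi⟩ := Set.mem_iUnion.1 (h hm)
    have h1 := fval_le (2 / 5) (1 / 5) 0 0 (Or.inl (by norm_num))
    have h2 := (le_ciSup
      (f := fun i => dist (pt (2 / 5) (1 / 5) i) ((1 / 2 : ℝ) : AddCircle (1 : ℝ)))
      (Set.finite_range _).bddAbove i).trans h1
    have hi' : pt (2 / 5) (1 / 5) i = ((0 : ℝ) : AddCircle (1 : ℝ)) := hi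
    simp only [hi'] at h2
    rw [dist_half] at h2
    obtain ⟨h3, h4⟩ := abs_le.1 h2
    have h5 : round ((0 : ℝ) - 1 / 2) < 0 := by
      have : ((round ((0 : ℝ) - 1 / 2) : ℤ) : ℝ) < ((0 : ℤ) : ℝ) := by push_cast; linarith
      exact_mod_cast this
    have h6 : -1 < round ((0 : ℝ) - 1 / 2) := by
      have : ((-1 : ℤ) : ℝ) < ((round ((0 : ℝ) - 1 / 2) : ℤ) : ℝ) := by push_cast; linarith
      exact_mod_cast this
    omega
  · exact DVal_of _ subset_rfl (pt (2 / 5) (1 / 5)) ((mem_U8 _).2 ⟨_, _, rfl⟩)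
      (fval_le _ _ 0 0 (Or.inl (by norm_num)))
  · have hfin : (((fun z : ℤ × ℤ => DVal (line z.1 z.2)) ''
        (Set.Icc (-15) 15 ×ˢ Set.Icc (-15) 15)) ∪ {3 / 10}).Finite :=
      (((Set.finite_Icc _ _).prod (Set.finite_Icc _ _)).image _).union (Set.finite_singleton _)
    refine hfin.subset ?_
    rintro d ⟨T, hT, -, hU, rfl⟩
    obtain ⟨p, q, hc, rfl⟩ := subtorus_eq_line T hT hU
    by_cases h : 15 ≤ |p| ∨ 15 ≤ |q|
    · exact Or.inr (DVal_line p q hc h)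
    · push Not at h
      have hp := abs_lt.1 h.1
      have hq := abs_lt.1 h.2
      exact Or.inl ⟨(p, q), ⟨⟨by simp; omega, by simp; omega⟩, ⟨by simp; omega, by simp; omega⟩⟩, rfl⟩
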